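/- (Diversity collapse without DropOut.) Fix M ≥ 1 and p ∈ {1,…,M}. For each n, let z₁⁽ⁿ⁾,…,z_M⁽ⁿ⁾ be pairwise uncorrelated standardized real random variables, let y⁽ⁿ⁾ be a standardized real random variable, set the weights θ_m⁽ⁿ⁾ = ρ_{z_m⁽ⁿ⁾, y⁽ⁿ⁾}² (the squared correlation of each base model with the target), and define the ensemble prediction z̄⁽ⁿ⁾ = Σ_m θ_m⁽ⁿ⁾ z_m⁽ⁿ⁾ and its diversity α_n = E[Σ_m θ_m⁽ⁿ⁾ (z_m⁽ⁿ⁾ − z̄⁽ⁿ⁾)²]. If ρ_{z_p⁽ⁿ⁾, y⁽ⁿ⁾} → 1 as n → ∞, then α_n → 0. -/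

import Mathlib

open MeasureTheory ProbabilityTheory Filter

/-- The covariance `Cov(X, Y) = E[(X − E[X])·(Y − E[Y])]` of two real-valued
random variables.  For standardized `X` and `Y` this equals their correlation. -/
noncomputable def covar {Ω : Type*} [MeasurableSpace Ω] (μ : Measure Ω) (X Y : Ω → ℝ) : ℝ :=
  ∫ ω, (X ω - ∫ ω', X ω' ∂μ) * (Y ω - ∫ ω', Y ω' ∂μ) ∂μ

lemma quad_aux {Ω : Type*} [MeasurableSpace Ω] (μ : Measure Ω) {M : ℕ}
    (z : Fin M → Ω → ℝ) (u : Ω → ℝ) (hz : ∀ m, MemLp (z m) 2 μ) (hu : MemLp u 2 μ)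
    (hO : ∀ i j, ∫ ω, z i ω * z j ω ∂μ = if i = j then 1 else 0) (b : Fin M → ℝ) :
    Integrable (fun ω => (u ω - ∑ j, b j * z j ω) ^ 2) μ ∧
    ∫ ω, (u ω - ∑ j, b j * z j ω) ^ 2 ∂μ =
      ∫ ω, u ω * u ω ∂μ - 2 * ∑ j, b j * ∫ ω, u ω * z j ω ∂μ + ∑ j, b j ^ 2 := by
  have e : (fun ω => (u ω - ∑ j, b j * z j ω) ^ 2) = fun ω =>
      (u ω * u ω - 2 * ∑ j, b j * (u ω * z j ω)) + ∑ i, ∑ j, (b i * b j) * (z i ω * z j ω) := by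
    funext ω
    have h1 : ∑ j, b j * (u ω * z j ω) = u ω * ∑ j, b j * z j ω := by
      rw [Finset.mul_sum]; exact Finset.sum_congr rfl fun j _ => by ring
    have h2 : ∑ i, ∑ j, (b i * b j) * (z i ω * z j ω)
        = (∑ j, b j * z j ω) * ∑ j, b j * z j ω := by
      rw [Finset.sum_mul_sum]
      exact Finset.sum_congr rfl fun i _ => Finset.sum_congr rfl fun j _ => by ring
    rw [h1, h2]; ring
  have i1 : Integrable (fun ω => u ω * u ω) μ := hu.integrable_mul hu
  have i2 : ∀ j, Integrable (fun ω => b j * (u ω * z j ω)) μ :=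
    fun j => (hu.integrable_mul (hz j)).const_mul _
  have i2' : Integrable (fun ω => 2 * ∑ j, b j * (u ω * z j ω)) μ :=
    (integrable_finsetSum _ fun j _ => i2 j).const_mul _
  have i3 : ∀ i j, Integrable (fun ω => (b i * b j) * (z i ω * z j ω)) μ :=
    fun i j => ((hz i).integrable_mul (hz j)).const_mul _
  have i3' : ∀ i, Integrable (fun ω => ∑ j, (b i * b j) * (z i ω * z j ω)) μ :=
    fun i => integrable_finsetSum _ fun j _ => i3 i j
  have i3'' : Integrable (fun ω => ∑ i, ∑ j, (b i * b j) * (z i ω * z j ω)) μ :=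
    integrable_finsetSum _ fun i _ => i3' i
  have i4 : Integrable (fun ω => u ω * u ω - 2 * ∑ j, b j * (u ω * z j ω)) μ := i1.sub i2'
  rw [e]
  refine ⟨i4.add i3'', ?_⟩
  rw [integral_add i4 i3'', integral_sub i1 i2', integral_const_mul,
    integral_finsetSum _ fun j _ => i2 j, integral_finsetSum _ fun i _ => i3' i]
  congr 1
  · simp only [integral_const_mul]
  · refine Finset.sum_congr rfl fun i _ => ?_
    rw [integral_finsetSum _ fun j _ => i3 i j]
    simp only [integral_const_mul, hO]
    simp [sq]

lemma std_aux {Ω : Type*} [MeasurableSpace Ω] (μ : Measure Ω) [IsProbabilityMeasure μ]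
    (u : Ω → ℝ) (hm : Measurable u) (h0 : ∫ ω, u ω ∂μ = 0) (hv : variance u μ = 1) :
    MemLp u 2 μ ∧ ∫ ω, u ω * u ω ∂μ = 1 := by
  have h : MemLp u 2 μ := by
    by_contra hc
    have := evariance_eq_top hm.aestronglyMeasurable hc
    simp [variance, this] at hv
  refine ⟨h, ?_⟩
  rw [variance_of_integral_eq_zero hm.aemeasurable h0] at hv
  simpa [sq] using hv

lemma main_aux {Ω : Type*} [MeasurableSpace Ω] (μ : Measure Ω) [IsProbabilityMeasure μ] {M : ℕ}
    (z : Fin M → Ω → ℝ) (y : Ω → ℝ) (θ : Fin M → ℝ)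
    (hzmeas : ∀ m, Measurable (z m))
    (hzmean : ∀ m, ∫ ω, z m ω ∂μ = 0)
    (hzvar : ∀ m, variance (z m) μ = 1)
    (huncorr : ∀ m m', m ≠ m' → covar μ (z m) (z m') = 0)
    (hymeas : Measurable y)
    (hymean : ∫ ω, y ω ∂μ = 0)
    (hyvar : variance y μ = 1)
    (hθ : ∀ m, θ m = (covar μ (z m) y) ^ 2) :
    ∑ m, θ m ≤ 1 ∧ ∫ ω, ∑ m, θ m * (z m ω - ∑ m', θ m' * z m' ω) ^ 2 ∂μ
      = ∑ m, θ m * (1 - 2 * θ m + ∑ j, θ j ^ 2) := by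
  have hz := fun m => std_aux μ (z m) (hzmeas m) (hzmean m) (hzvar m)
  obtain ⟨hy, hy1⟩ := std_aux μ y hymeas hymean hyvar
  have hO : ∀ i j, ∫ ω, z i ω * z j ω ∂μ = if i = j then 1 else 0 := by
    intro i j
    split_ifs with h
    · subst h; exact (hz i).2
    · simpa [covar, hzmean] using huncorr i j h
  constructor
  · obtain ⟨-, h⟩ := quad_aux μ z y (fun m => (hz m).1) hy hO (fun m => covar μ (z m) y)
    have hc : ∀ j, ∫ ω, y ω * z j ω ∂μ = covar μ (z j) y := by
      intro j; simp [covar, hzmean, hymean, mul_comm]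
    have h0 : 0 ≤ ∫ ω, (y ω - ∑ j, covar μ (z j) y * z j ω) ^ 2 ∂μ :=
      integral_nonneg fun ω => sq_nonneg _
    simp only [hc, ← sq, ← hθ] at h
    simp only [← sq] at hy1
    linarith
  · have q := fun m => quad_aux μ z (z m) (fun m => (hz m).1) (hz m).1 hO θ
    rw [integral_finsetSum _ fun m _ => (q m).1.const_mul _]
    refine Finset.sum_congr rfl fun m _ => ?_
    rw [integral_const_mul, (q m).2]
    simp [hO]

/-- **Diversity collapse without DropOut.**  Fix `M ≥ 1` and `p`.  For each `n`, let
`z n 1, …, z n M` be pairwise uncorrelated standardized random variables, `y n` a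
standardized target, and take the weights `θ n m = ρ_{z n m, y n}²` (squared
correlations).  If the correlation of the preferred model `ρ_{z n p, y n} → 1`, then
the diversity `α n = E[∑ m, θ n m · (z n m − z̄ n)²]` of the ensemble prediction
`z̄ n = ∑ m, θ n m · z n m` collapses to `0`. -/
theorem diversity_collapse {Ω : ℕ → Type*} [∀ n, MeasurableSpace (Ω n)]
    (μ : ∀ n, Measure (Ω n)) [∀ n, IsProbabilityMeasure (μ n)]
    (M : ℕ) (hM : 1 ≤ M) (p : Fin M)
    (z : ∀ n, Fin M → Ω n → ℝ) (y : ∀ n, Ω n → ℝ) (θ : ℕ → Fin M → ℝ)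
    (hzmeas : ∀ n m, Measurable (z n m))
    (hzmean : ∀ n m, ∫ ω, z n m ω ∂(μ n) = 0)
    (hzvar : ∀ n m, variance (z n m) (μ n) = 1)
    (huncorr : ∀ n, ∀ m m', m ≠ m' → covar (μ n) (z n m) (z n m') = 0)
    (hymeas : ∀ n, Measurable (y n))
    (hymean : ∀ n, ∫ ω, y n ω ∂(μ n) = 0)
    (hyvar : ∀ n, variance (y n) (μ n) = 1)
    (hθ : ∀ n m, θ n m = (covar (μ n) (z n m) (y n)) ^ 2)
    (hlim : Tendsto (fun n => covar (μ n) (z n p) (y n)) atTop (nhds 1)) :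
    Tendsto
      (fun n => ∫ ω, ∑ m, θ n m * (z n m ω - ∑ m', θ n m' * z n m' ω) ^ 2 ∂(μ n))
      atTop (nhds 0) := by
  have key := fun n => main_aux (μ n) (z n) (y n) (θ n) (hzmeas n) (hzmean n) (hzvar n)
    (huncorr n) (hymeas n) (hymean n) (hyvar n) (hθ n)
  simp only [fun n => (key n).2]
  have hp : Tendsto (fun n => θ n p) atTop (nhds 1) := by
    simp only [hθ]
    simpa using hlim.pow 2
  have hnn : ∀ n m, 0 ≤ θ n m := fun n m => by rw [hθ]; positivity
  have hm : ∀ m, Tendsto (fun n => θ n m) atTop (nhds (if m = p then 1 else 0)) := by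
    intro m
    split_ifs with h
    · subst h; exact hp
    · have h1 : Tendsto (fun n => 1 - θ n p) atTop (nhds 0) := by
        simpa using hp.const_sub 1
      refine squeeze_zero (fun n => hnn n m) (fun n => ?_) h1
      have h2 : ∑ i ∈ {m, p}, θ n i ≤ ∑ i, θ n i :=
        Finset.sum_le_sum_of_subset_of_nonneg (Finset.subset_univ _) fun i _ _ => hnn n i
      rw [Finset.sum_pair h] at h2
      linarith [(key n).1]
  have hQ := tendsto_finsetSum Finset.univ fun j _ => (hm j).pow 2
  have := tendsto_finsetSum Finset.univ fun m _ =>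
    (hm m).mul ((((hm m).const_mul 2).const_sub 1).add hQ)
  convert this using 2
  simp
  norm_num
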